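/- arXiv:2112.15154 — 2 statements merged into one kernel-verified Lean document; each statement's English description precedes it below -/
import Mathlib

section
/- For every ε ∈ [0,1) and every M ∈ ℝ, the series Σ_{n=1}^∞ (2·J_n(nε)/n)·sin(nM) converges, and its sum equals ψ(M) − M, where ψ(M) is the unique real solution of Kepler's equation M = ψ − ε·sin ψ and J_n(x) = (1/π)·∫_0^π cos(nθ − x·sin θ) dθ. -/
open Real MeasureTheory intervalIntegral Filter

/-- Bessel function of the first kind of integer order,
`J_n(x) = (1/π) ∫_0^π cos(nθ - x sin θ) dθ`. -/
noncomputable def besselJ (n : ℕ) (x : ℝ) : ℝ :=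
  (1 / π) * ∫ θ in (0:ℝ)..π, Real.cos (n * θ - x * Real.sin θ)

/-! With mean anomaly `g θ = θ - ε sin θ`, the difference `ψ(M) - M` is a `2π`-periodic, odd, `C¹`
function of `M`, hence the sum of its sine series. Substituting `M = g θ` turns its `n`-th sine
coefficient into `(2/π) ∫_0^π ε sin θ sin(n g θ) g'(θ) dθ`, and one integration by parts together
with `ε cos θ = 1 - g'(θ)` leaves `(2/(πn)) ∫_0^π cos(n g θ) dθ = 2 J_n(nε)/n`. -/

section FourierSeries

-- `c_n(f) = (b - a) c_n(f') / (2πin)`, where both `1 / n` and `c_n(f')` are square-summable.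
lemma summable_fourierCoeffOn_of_hasDerivAt {a b : ℝ} (hab : a < b) {f f' : ℝ → ℂ}
    (hf : ∀ x ∈ Set.uIcc a b, HasDerivAt f (f' x) x)
    (hf' : MemLp f' 2 (volume.restrict (Set.Ioc a b))) (hfab : f a = f b) :
    Summable (fourierCoeffOn hab f) := by
  have integrable_f' : IntervalIntegrable f' volume a b :=
    (intervalIntegrable_iff_integrableOn_Ioc_of_le hab.le).2 (hf'.integrable one_le_two)
  have norm_coeff {n : ℤ} (hn : n ≠ 0) :
      ‖fourierCoeffOn hab f n‖ =
        (b - a) / (2 * π) * ((1 / |(n : ℝ)|) * ‖fourierCoeffOn hab f' n‖) := by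
    rw [fourierCoeffOn_of_hasDerivAt hab hn hf integrable_f', hfab, sub_self, mul_zero, zero_sub]
    simp only [norm_mul, norm_neg, norm_div, norm_one, ← Complex.ofReal_sub, Complex.norm_real,
      Complex.norm_I, Complex.norm_intCast, RCLike.norm_ofNat, Real.norm_eq_abs,
      abs_of_pos pi_pos, abs_of_pos (sub_pos.2 hab)]
    ring
  have summable_products :
      Summable fun n : ℤ => (1 / |(n : ℝ)|) * ‖fourierCoeffOn hab f' n‖ := by
    refine Real.summable_mul_of_Lp_Lq_of_nonneg Real.HolderConjugate.two_two
      (fun _ => by positivity) (fun _ => norm_nonneg _) ?_ ?_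
    · simpa using Real.summable_one_div_int_pow.2 one_lt_two
    · simpa using (hasSum_sq_fourierCoeffOn hab hf').summable
  refine (summable_products.mul_left ((b - a) / (2 * π))).of_norm_bounded_eventually ?_
  filter_upwards [(Set.finite_singleton (0 : ℤ)).compl_mem_cofinite] with n hn
  exact (norm_coeff hn).le

variable {T : ℝ} [Fact (0 < T)] {f : ℝ → ℂ}

lemma fourierCoeff_lift_eq_fourierCoeffOn (hf : Function.Periodic f T) (a : ℝ) (n : ℤ) :
    fourierCoeff (T := T) hf.lift n =
      fourierCoeffOn (lt_add_of_pos_right a (Fact.out : 0 < T)) f n := by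
  rw [fourierCoeffOn_eq_integral, fourierCoeff_eq_intervalIntegral _ n a, add_sub_cancel_left]
  simp only [Function.Periodic.lift_coe]

lemma hasSum_fourierCoeff_lift_of_contDiff (hper : Function.Periodic f T) (hf : ContDiff ℝ 1 f)
    (x : ℝ) :
    HasSum (fun n : ℤ => fourierCoeff hper.lift n • fourier n (x : AddCircle T)) (f x) := by
  have summable_coeff : Summable (fourierCoeff (T := T) hper.lift) := by
    simp only [funext (fourierCoeff_lift_eq_fourierCoeffOn hper 0)]
    refine summable_fourierCoeffOn_of_hasDerivAt _
      (fun y _ => (hf.differentiable_one y).hasDerivAt) ?_ (by rw [hper])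
    have continuous_deriv : Continuous (deriv f) := hf.continuous_deriv_one
    exact (memLp_two_iff_integrable_sq_norm continuous_deriv.aestronglyMeasurable).2
      (continuous_deriv.norm.pow 2).integrableOn_Ioc
  let F : C(AddCircle T, ℂ) := ⟨hper.lift, continuous_coinduced_dom.2 hf.continuous⟩
  exact has_pointwise_sum_fourier_series_of_summable (f := F) summable_coeff x

end FourierSeries

section SineSeries

lemma integral_neg_self_eq_integral_add_comp_neg {E : Type*} [NormedAddCommGroup E]
    [NormedSpace ℝ E] {f : ℝ → E} {a : ℝ} (hf : IntervalIntegrable f volume (-a) a) :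
    ∫ x in (-a)..a, f x = ∫ x in 0..a, (f x + f (-x)) := by
  have zero_mem : (0 : ℝ) ∈ Set.uIcc (-a) a := by
    rcases le_total 0 a with ha | ha <;> simp [ha]
  have hf_left : IntervalIntegrable f volume (-a) 0 :=
    hf.mono_set (Set.uIcc_subset_uIcc_left zero_mem)
  have hf_right : IntervalIntegrable f volume 0 a :=
    hf.mono_set (Set.uIcc_subset_uIcc_right zero_mem)
  have hf_neg : IntervalIntegrable (fun x => f (-x)) volume 0 a := by
    simpa using (IntervalIntegrable.comp_sub_left hf_left 0).symm
  rw [integral_add hf_right hf_neg, integral_comp_neg, neg_zero, add_comm,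
    integral_add_adjacent_intervals hf_left hf_right]

local instance : Fact (0 < 2 * π) := ⟨two_pi_pos⟩

lemma fourier_two_pi_coe_apply (n : ℤ) (x : ℝ) :
    fourier n (x : AddCircle (2 * π)) = Complex.exp ((n * x : ℝ) * Complex.I) := by
  rw [fourier_coe_apply]
  congr 1
  push_cast
  field_simp [Complex.ofReal_ne_zero.2 pi_ne_zero]

variable {f : ℝ → ℝ}

lemma fourierCoeff_lift_of_odd (hodd : Function.Odd f)
    (hper : Function.Periodic (fun x => (f x : ℂ)) (2 * π))
    (hf : IntervalIntegrable f volume (-π) π) (n : ℤ) :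
    fourierCoeff (T := 2 * π) hper.lift n =
      -Complex.I / π * (∫ x in 0..π, f x * sin (n * x) : ℝ) := by
  have add_comp_neg (x : ℝ) :
      fourier (-n) (x : AddCircle (2 * π)) • (f x : ℂ) +
        fourier (-n) ((-x : ℝ) : AddCircle (2 * π)) • (f (-x) : ℂ) =
      -2 * Complex.I * (f x * sin (n * x) : ℝ) := by
    simp only [fourier_two_pi_coe_apply, hodd x, Complex.exp_mul_I, smul_eq_mul]
    push_cast
    simp only [neg_mul, mul_neg, neg_neg, Complex.cos_neg, Complex.sin_neg]
    ring
  have integrable : IntervalIntegrable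
      (fun x : ℝ => fourier (-n) (x : AddCircle (2 * π)) • (f x : ℂ)) volume (-π) π :=
    IntervalIntegrable.continuousOn_mul ⟨hf.1.ofReal, hf.2.ofReal⟩
      (Continuous.continuousOn (by fun_prop))
  rw [fourierCoeff_eq_intervalIntegral _ n (-π), show -π + 2 * π = π by ring]
  simp only [Function.Periodic.lift_coe]
  rw [integral_neg_self_eq_integral_add_comp_neg integrable]
  simp only [add_comp_neg]
  rw [intervalIntegral.integral_const_mul, intervalIntegral.integral_ofReal, Complex.real_smul]
  push_cast
  ring

theorem hasSum_sine_series_of_contDiff (hodd : Function.Odd f)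
    (hper : Function.Periodic f (2 * π)) (hf : ContDiff ℝ 1 f) (x : ℝ) :
    HasSum (fun n : ℕ => 2 / π * (∫ t in 0..π, f t * sin (n * t)) * sin (n * x)) (f x) := by
  have hper' : Function.Periodic (fun x => (f x : ℂ)) (2 * π) := hper.comp Complex.ofReal
  have pairwise_sum :=
    (hasSum_fourierCoeff_lift_of_contDiff hper' (Complex.ofRealCLM.contDiff.comp hf) x).nat_add_neg
  simp only [fourierCoeff_lift_of_odd hodd hper' (hf.continuous.intervalIntegrable _ _),
    fourier_two_pi_coe_apply, Complex.exp_mul_I] at pairwise_sum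
  rw [← Complex.hasSum_ofReal]
  convert! pairwise_sum using 1
  · ext n
    push_cast
    simp only [neg_mul, mul_neg, Complex.cos_neg, Complex.sin_neg, sin_neg,
      intervalIntegral.integral_neg, Complex.ofReal_neg, smul_eq_mul]
    linear_combination
      2 / π * (∫ t in 0..π, f t * sin (n * t) : ℝ) * Complex.sin (n * x) * Complex.I_sq
  · simp

end SineSeries

section Kepler

/-- The mean anomaly of the point with eccentric anomaly `θ` on a Kepler orbit of eccentricity
`ε`. -/
noncomputable def meanAnomaly (ε θ : ℝ) : ℝ := θ - ε * sin θ

variable {ε : ℝ}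

lemma hasDerivAt_meanAnomaly (ε θ : ℝ) : HasDerivAt (meanAnomaly ε) (1 - ε * cos θ) θ :=
  (hasDerivAt_id θ).sub ((hasDerivAt_sin θ).const_mul ε)

lemma contDiff_meanAnomaly (ε : ℝ) {n : WithTop ℕ∞} : ContDiff ℝ n (meanAnomaly ε) :=
  contDiff_id.sub (contDiff_const.mul contDiff_sin)

lemma continuous_meanAnomaly (ε : ℝ) : Continuous (meanAnomaly ε) :=
  (contDiff_meanAnomaly ε (n := 0)).continuous

@[simp] lemma meanAnomaly_zero (ε : ℝ) : meanAnomaly ε 0 = 0 := by simp [meanAnomaly]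

@[simp] lemma meanAnomaly_pi (ε : ℝ) : meanAnomaly ε π = π := by simp [meanAnomaly]

lemma meanAnomaly_neg (ε θ : ℝ) : meanAnomaly ε (-θ) = -meanAnomaly ε θ := by
  simp only [meanAnomaly, sin_neg]
  ring

lemma meanAnomaly_add_two_pi (ε θ : ℝ) :
    meanAnomaly ε (θ + 2 * π) = meanAnomaly ε θ + 2 * π := by
  simp only [meanAnomaly, sin_add_two_pi]
  ring

lemma one_sub_mul_cos_pos (hε : |ε| < 1) (θ : ℝ) : 0 < 1 - ε * cos θ := by
  have : |ε * cos θ| ≤ |ε| := by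
    simpa [abs_mul] using mul_le_of_le_one_right (abs_nonneg ε) (abs_cos_le_one θ)
  linarith [le_abs_self (ε * cos θ)]

lemma strictMono_meanAnomaly (hε : |ε| < 1) : StrictMono (meanAnomaly ε) :=
  strictMono_of_deriv_pos fun θ => by
    rw [(hasDerivAt_meanAnomaly ε θ).deriv]
    exact one_sub_mul_cos_pos hε θ

lemma surjective_meanAnomaly (ε : ℝ) : Function.Surjective (meanAnomaly ε) := by
  have abs_mul_sin_le (θ : ℝ) : |ε * sin θ| ≤ |ε| := by
    simpa [abs_mul] using mul_le_of_le_one_right (abs_nonneg ε) (abs_sin_le_one θ)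
  have sub_abs_le (θ : ℝ) : θ + -|ε| ≤ meanAnomaly ε θ := by
    rw [meanAnomaly]
    linarith [(abs_le.1 (abs_mul_sin_le θ)).2]
  have le_add_abs (θ : ℝ) : meanAnomaly ε θ ≤ θ + |ε| := by
    rw [meanAnomaly]
    linarith [(abs_le.1 (abs_mul_sin_le θ)).1]
  exact (continuous_meanAnomaly ε).surjective
    (tendsto_atTop_mono sub_abs_le (tendsto_atTop_add_const_right _ _ tendsto_id))
    (tendsto_atBot_mono le_add_abs (tendsto_atBot_add_const_right _ _ tendsto_id))

/-- The eccentric anomaly as a function of the mean anomaly, that is, the solution operator of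
Kepler's equation, bundled as an order isomorphism so that its continuity comes for free. -/
noncomputable def eccentricAnomaly (hε : |ε| < 1) : ℝ ≃o ℝ :=
  (StrictMono.orderIsoOfSurjective _ (strictMono_meanAnomaly hε) (surjective_meanAnomaly ε)).symm

lemma eccentricAnomaly_meanAnomaly (hε : |ε| < 1) (θ : ℝ) :
    eccentricAnomaly hε (meanAnomaly ε θ) = θ :=
  StrictMono.orderIsoOfSurjective_symm_apply_self ..

lemma contDiff_eccentricAnomaly (hε : |ε| < 1) {n : WithTop ℕ∞} :
    ContDiff ℝ n (eccentricAnomaly hε) :=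
  (eccentricAnomaly hε).symm.toHomeomorph.contDiff_symm_deriv
    (fun θ => (one_sub_mul_cos_pos hε θ).ne') (hasDerivAt_meanAnomaly ε) (contDiff_meanAnomaly ε)

lemma odd_eccentricAnomaly_sub_self (hε : |ε| < 1) :
    Function.Odd fun M => eccentricAnomaly hε M - M := by
  intro M
  obtain ⟨θ, rfl⟩ := surjective_meanAnomaly ε M
  simp only [← meanAnomaly_neg, eccentricAnomaly_meanAnomaly]
  rw [meanAnomaly_neg]
  ring

lemma periodic_eccentricAnomaly_sub_self (hε : |ε| < 1) :
    Function.Periodic (fun M => eccentricAnomaly hε M - M) (2 * π) := by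
  intro M
  obtain ⟨θ, rfl⟩ := surjective_meanAnomaly ε M
  simp only [← meanAnomaly_add_two_pi, eccentricAnomaly_meanAnomaly]
  rw [meanAnomaly_add_two_pi]
  ring

lemma besselJ_mul_eq_integral_cos_meanAnomaly (n : ℕ) (ε : ℝ) :
    besselJ n (n * ε) = 1 / π * ∫ θ in 0..π, cos (n * meanAnomaly ε θ) := by
  simp only [besselJ, meanAnomaly, mul_sub, mul_assoc]

lemma hasDerivAt_const_mul_meanAnomaly (c ε θ : ℝ) :
    HasDerivAt (fun θ => c * meanAnomaly ε θ) (c * (1 - ε * cos θ)) θ :=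
  (hasDerivAt_meanAnomaly ε θ).const_mul c

lemma integral_cos_mul_cos_meanAnomaly {n : ℕ} (hn : n ≠ 0) (ε : ℝ) :
    ∫ θ in 0..π, ε * cos θ * cos (n * meanAnomaly ε θ) = π * besselJ n (n * ε) := by
  have hcont := continuous_meanAnomaly ε
  have integral_cos_mul_deriv :
      ∫ θ in 0..π, cos (n * meanAnomaly ε θ) * (n * (1 - ε * cos θ)) = 0 := by
    rw [integral_eq_sub_of_hasDerivAt
      (fun θ _ => (hasDerivAt_const_mul_meanAnomaly n ε θ).sin)
      (Continuous.intervalIntegrable (by fun_prop) _ _)]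
    simp
  calc ∫ θ in 0..π, ε * cos θ * cos (n * meanAnomaly ε θ)
      = ∫ θ in 0..π, (cos (n * meanAnomaly ε θ) -
          1 / n * (cos (n * meanAnomaly ε θ) * (n * (1 - ε * cos θ)))) :=
        integral_congr fun θ _ => by field_simp; ring
    _ = ∫ θ in 0..π, cos (n * meanAnomaly ε θ) := by
        rw [integral_sub (Continuous.intervalIntegrable (by fun_prop) _ _)
          (Continuous.intervalIntegrable (by fun_prop) _ _),
          intervalIntegral.integral_const_mul, integral_cos_mul_deriv, mul_zero, sub_zero]
    _ = π * besselJ n (n * ε) := by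
        rw [besselJ_mul_eq_integral_cos_meanAnomaly]
        field_simp

lemma integral_sin_mul_sin_meanAnomaly {n : ℕ} (hn : n ≠ 0) (ε : ℝ) :
    ∫ θ in 0..π, ε * sin θ * (sin (n * meanAnomaly ε θ) * (1 - ε * cos θ)) =
      π / n * besselJ n (n * ε) := by
  have hcont := continuous_meanAnomaly ε
  have hasDerivAt_cos_div (θ : ℝ) :
      HasDerivAt (fun θ => -1 / n * cos (n * meanAnomaly ε θ))
        (sin (n * meanAnomaly ε θ) * (1 - ε * cos θ)) θ :=
    ((hasDerivAt_const_mul_meanAnomaly n ε θ).cos.const_mul (-1 / n : ℝ)).congr_deriv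
      (by field_simp)
  rw [integral_mul_deriv_eq_deriv_mul (fun θ _ => (hasDerivAt_sin θ).const_mul ε)
    (fun θ _ => hasDerivAt_cos_div θ) (Continuous.intervalIntegrable (by fun_prop) _ _)
    (Continuous.intervalIntegrable (by fun_prop) _ _)]
  simp only [sin_pi, sin_zero, mul_zero, zero_mul, zero_sub, mul_left_comm _ (-1 / n : ℝ),
    intervalIntegral.integral_const_mul, integral_cos_mul_cos_meanAnomaly hn]
  ring

lemma integral_eccentricAnomaly_sub_self_mul_sin (hε : |ε| < 1) {n : ℕ} (hn : n ≠ 0) :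
    ∫ M in 0..π, (eccentricAnomaly hε M - M) * sin (n * M) = π / n * besselJ n (n * ε) := by
  have hcont : Continuous fun M => (eccentricAnomaly hε M - M) * sin (n * M) := by
    have := (eccentricAnomaly hε).continuous
    fun_prop
  have substitution := integral_comp_mul_deriv (a := 0) (b := π)
    (fun θ _ => hasDerivAt_meanAnomaly ε θ) (by fun_prop) hcont
  rw [meanAnomaly_zero, meanAnomaly_pi] at substitution
  rw [← substitution, ← integral_sin_mul_sin_meanAnomaly hn]
  refine integral_congr fun θ _ => ?_
  simp only [Function.comp_apply, eccentricAnomaly_meanAnomaly]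
  rw [mul_assoc]
  simp [meanAnomaly]

end Kepler

theorem kepler_bessel_series_general {ε M ψ : ℝ} (hε : |ε| < 1) (hψ : M = ψ - ε * sin ψ) :
    HasSum (fun n : ℕ => 2 * besselJ (n + 1) ((n + 1) * ε) / (n + 1) * sin ((n + 1) * M))
      (ψ - M) := by
  have hψ' : eccentricAnomaly hε M = ψ := hψ ▸ eccentricAnomaly_meanAnomaly hε ψ
  have sine_series := hasSum_sine_series_of_contDiff (odd_eccentricAnomaly_sub_self hε)
    (periodic_eccentricAnomaly_sub_self hε) ((contDiff_eccentricAnomaly hε).sub contDiff_id) M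
  rw [← hasSum_nat_add_iff' 1, hψ'] at sine_series
  convert! sine_series using 1
  · ext n
    rw [integral_eccentricAnomaly_sub_self_mul_sin hε n.succ_ne_zero]
    push_cast
    field_simp
  · simp

/-- For every `ε ∈ [0,1)` and every `M ∈ ℝ`, the series
`Σ_{n=1}^∞ (2 J_n(nε)/n) sin(nM)` converges and its sum is `ψ(M) - M`,
where `ψ(M)` is the unique real solution of Kepler's equation `M = ψ - ε sin ψ`. -/
theorem kepler_bessel_series (ε : ℝ) (hε : ε ∈ Set.Ico (0:ℝ) 1)
    (ψ : ℝ → ℝ) (hψ : ∀ M : ℝ, M = ψ M - ε * Real.sin (ψ M)) (M : ℝ) :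
    Tendsto (fun N : ℕ => ∑ n ∈ Finset.range N,
        (2 * besselJ (n + 1) ((n + 1) * ε) / (n + 1)) * Real.sin ((n + 1) * M))
      atTop (nhds (ψ M - M)) :=
  (kepler_bessel_series_general (abs_lt.2 ⟨by linarith [hε.1], hε.2⟩) (hψ M)).tendsto_sum_nat
end

section
/- For every ε ∈ (0,1) there exists a constant C > 0 such that for all integers n ≥ 1, |J_n(nε)| ≤ C·ρ(ε)^n/√n, where J_n(x) = (1/π)·∫_0^π cos(nθ − x·sin θ) dθ and ρ(ε) = exp(√(1−ε²))·(1 − √(1−ε²))/ε. -/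
open Real MeasureTheory intervalIntegral

/-- `ρ(ε) = exp(√(1-ε²))·(1-√(1-ε²))/ε`. -/
noncomputable def kapteynRho (ε : ℝ) : ℝ :=
  Real.exp (Real.sqrt (1 - ε ^ 2)) * (1 - Real.sqrt (1 - ε ^ 2)) / ε

/-!
The function `z ↦ exp (x / 2 * (z - z⁻¹)) / z ^ n` is holomorphic off the origin and `J_n(x)` is
its mean over the unit circle, hence over a circle of any radius `R`. There its modulus is
`R⁻¹ ^ n * exp (b * cos θ)` with `b = x / 2 * (R - R⁻¹)`, and comparing `cos` with a parabola
(Laplace's method) bounds the mean by `R⁻¹ ^ n * exp b * √(π / (8 * b))`. For `x = n * ε` the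
saddle point `R = (1 + √(1 - ε ^ 2)) / ε` makes `b = n * √(1 - ε ^ 2)` and turns
`R⁻¹ ^ n * exp b` into `ρ(ε) ^ n`.
-/

section CircleAverage

variable {E : Type*} [NormedAddCommGroup E] {f : ℂ → E} {c : ℂ} {r R : ℝ}

lemma norm_circleAverage_le_circleAverage_norm [NormedSpace ℝ E] :
    ‖circleAverage f c R‖ ≤ circleAverage (fun z ↦ ‖f z‖) c R := by
  rw [circleAverage_def, circleAverage_def, norm_smul, norm_of_nonneg (by positivity), smul_eq_mul]
  gcongr
  exact norm_integral_le_integral_norm two_pi_pos.le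

lemma circleAverage_eq_integral_neg_pi_pi [NormedSpace ℝ E] :
    circleAverage f c R = (2 * π)⁻¹ • ∫ θ in -π..π, f (circleMap c R θ) := by
  rw [circleAverage_eq_integral_add (-π), integral_comp_add_right (fun θ ↦ f (circleMap c R θ))]
  ring_nf

lemma circleAverage_eq_of_differentiableOn_compl_center [NormedSpace ℂ E]
    (hf : DifferentiableOn ℂ f {c}ᶜ) (hr : r ≠ 0) (hR : R ≠ 0) :
    circleAverage f c r = circleAverage f c R := by
  wlog hle : |r| ≤ |R| generalizing r R
  · exact (this hR hr (le_of_not_ge hle)).symm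
  have hr' : 0 < |r| := abs_pos.2 hr
  have annulus_subset : Metric.closedBall c |R| \ Metric.ball c |r| ⊆ {c}ᶜ := by
    rintro z ⟨-, hz⟩ rfl
    exact hz (Metric.mem_ball_self hr')
  have hd : ∀ z ∈ (Metric.ball c |R| \ Metric.closedBall c |r|) \ ∅, DifferentiableAt ℂ f z := by
    rintro z ⟨⟨-, hz⟩, -⟩
    refine hf.differentiableAt (isOpen_compl_singleton.mem_nhds ?_)
    rintro rfl
    exact hz (Metric.mem_closedBall_self hr'.le)
  rw [← circleAverage_abs_radius (R := r), ← circleAverage_abs_radius (R := R),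
    circleAverage_eq_circleIntegral hr'.ne', circleAverage_eq_circleIntegral (abs_ne_zero.2 hR),
    Complex.circleIntegral_sub_center_inv_smul_eq_of_differentiable_on_annulus_off_countable
      hr' hle Set.countable_empty (hf.continuousOn.mono annulus_subset) hd]

end CircleAverage

/-- The function of `z` whose Laurent expansion at `0` has constant coefficient `J_n(x)`: the
generating function `exp (x / 2 * (z - z⁻¹))` of the Bessel functions divided by `z ^ n`. -/
noncomputable def besselKernel (n : ℕ) (x : ℝ) (z : ℂ) : ℂ :=
  Complex.exp (x / 2 * (z - z⁻¹)) / z ^ n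

section BesselKernel

variable (n : ℕ) (x : ℝ)

lemma differentiableOn_besselKernel : DifferentiableOn ℂ (besselKernel n x) {0}ᶜ := by
  intro z (hz : z ≠ 0)
  unfold besselKernel
  fun_prop (disch := simp [hz])

lemma circleIntegrable_besselKernel {R : ℝ} (hR : R ≠ 0) :
    CircleIntegrable (besselKernel n x) 0 R := by
  refine ((differentiableOn_besselKernel n x).continuousOn.mono ?_).circleIntegrable'
  rintro z hz rfl
  simp [hR, eq_comm] at hz

lemma besselKernel_circleMap_one (θ : ℝ) :
    besselKernel n x (circleMap 0 1 θ) = Complex.exp ((x * sin θ - n * θ : ℝ) * Complex.I) := by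
  have sub_inv : circleMap 0 1 θ - (circleMap 0 1 θ)⁻¹ = 2 * sin θ * Complex.I := by
    apply Complex.ext <;>
      simp [-Complex.ofReal_sin, circleMap_zero_inv, circleMap_zero_re, circleMap_zero_im, two_mul]
  have pow : circleMap 0 1 θ ^ n = Complex.exp (n * θ * Complex.I) := by
    simp [circleMap_zero, mul_assoc, Complex.exp_nat_mul]
  rw [besselKernel, sub_inv, pow, ← Complex.exp_sub]
  push_cast
  ring_nf

lemma norm_besselKernel_circleMap {R : ℝ} (hR : 0 ≤ R) (θ : ℝ) :
    ‖besselKernel n x (circleMap 0 R θ)‖ = R⁻¹ ^ n * exp (x / 2 * (R - R⁻¹) * cos θ) := by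
  have re_exponent : (x / 2 * (circleMap 0 R θ - (circleMap 0 R θ)⁻¹)).re =
      x / 2 * (R - R⁻¹) * cos θ := by
    rw [← Complex.ofReal_ofNat, ← Complex.ofReal_div, Complex.re_ofReal_mul, Complex.sub_re,
      circleMap_zero_inv, circleMap_zero_re, circleMap_zero_re, cos_neg]
    ring
  rw [besselKernel, norm_div, Complex.norm_exp, re_exponent, norm_pow, norm_circleMap_zero,
    abs_of_nonneg hR, inv_pow, div_eq_inv_mul]

end BesselKernel

lemma integral_neg_self_of_even {E : Type*} [NormedAddCommGroup E] [NormedSpace ℝ E] {f : ℝ → E}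
    {a : ℝ} (hf : f.Even) (hint : IntervalIntegrable f volume 0 a) :
    ∫ t in -a..a, f t = 2 • ∫ t in 0..a, f t := by
  have hint_neg : IntervalIntegrable f volume (-a) 0 := by
    simpa [hf _] using hint.comp_sub_left 0 |>.symm
  have reflect : ∫ t in -a..0, f t = ∫ t in 0..a, f t := by
    simpa [hf _] using integral_comp_neg (a := -a) (b := 0) f
  rw [← integral_add_adjacent_intervals hint_neg hint, reflect, two_nsmul]

lemma besselJ_eq_integral_neg_pi_pi (n : ℕ) (x : ℝ) :
    besselJ n x = (2 * π)⁻¹ * ∫ θ in -π..π, cos (n * θ - x * sin θ) := by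
  have even : Function.Even fun θ : ℝ ↦ cos (n * θ - x * sin θ) := fun θ ↦ by
    simp only [sin_neg]
    rw [← cos_neg]
    ring_nf
  have hint : IntervalIntegrable (fun θ : ℝ ↦ cos (n * θ - x * sin θ)) volume 0 π :=
    Continuous.intervalIntegrable (by fun_prop) _ _
  rw [integral_neg_self_of_even even hint, besselJ, two_nsmul]
  ring

lemma besselJ_eq_re_circleAverage_one (n : ℕ) (x : ℝ) :
    besselJ n x = (circleAverage (besselKernel n x) 0 1).re := by
  have re_kernel (θ : ℝ) :
      (besselKernel n x (circleMap 0 1 θ)).re = cos (n * θ - x * sin θ) := by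
    rw [besselKernel_circleMap_one, Complex.exp_ofReal_mul_I_re, ← cos_neg, neg_sub]
  rw [← Complex.reCLM_apply, ← Complex.reCLM.circleAverage_comp_comm
    (circleIntegrable_besselKernel n x one_ne_zero), circleAverage_eq_integral_neg_pi_pi,
    besselJ_eq_integral_neg_pi_pi]
  simp only [Function.comp_apply, Complex.reCLM_apply, re_kernel, smul_eq_mul]

lemma besselJ_eq_re_circleAverage (n : ℕ) (x : ℝ) {R : ℝ} (hR : R ≠ 0) :
    besselJ n x = (circleAverage (besselKernel n x) 0 R).re := by
  rw [besselJ_eq_re_circleAverage_one, circleAverage_eq_of_differentiableOn_compl_center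
    (differentiableOn_besselKernel n x) one_ne_zero hR]

lemma abs_besselJ_le_integral (n : ℕ) (x : ℝ) {R : ℝ} (hR : 0 < R) :
    |besselJ n x| ≤
      R⁻¹ ^ n * ((2 * π)⁻¹ * ∫ θ in -π..π, exp (x / 2 * (R - R⁻¹) * cos θ)) :=
  calc |besselJ n x|
    _ ≤ ‖circleAverage (besselKernel n x) 0 R‖ := by
      rw [besselJ_eq_re_circleAverage n x hR.ne']
      exact Complex.abs_re_le_norm _
    _ ≤ circleAverage (fun z ↦ ‖besselKernel n x z‖) 0 R :=
      norm_circleAverage_le_circleAverage_norm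
    _ = R⁻¹ ^ n * ((2 * π)⁻¹ * ∫ θ in -π..π, exp (x / 2 * (R - R⁻¹) * cos θ)) := by
      simp only [circleAverage_eq_integral_neg_pi_pi, norm_besselKernel_circleMap n x hR.le,
        intervalIntegral.integral_const_mul, smul_eq_mul]
      ring

lemma integral_exp_neg_mul_sq_le {b : ℝ} (hb : 0 < b) {u v : ℝ} (huv : u ≤ v) :
    ∫ t in u..v, exp (-b * t ^ 2) ≤ √(π / b) := by
  rw [integral_of_le huv, ← integral_gaussian]
  exact setIntegral_le_integral (integrable_exp_neg_mul_sq hb) (ae_of_all _ fun t ↦ (exp_pos _).le)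

lemma integral_exp_mul_cos_le {b : ℝ} (hb : 0 < b) :
    ∫ θ in -π..π, exp (b * cos θ) ≤ exp b * √(π ^ 3 / (2 * b)) := by
  have neg_pi_le_pi : -π ≤ π := neg_le_self pi_pos.le
  have pointwise (θ : ℝ) (hθ : θ ∈ Set.Icc (-π) π) :
      exp (b * cos θ) ≤ exp b * exp (-(2 * b / π ^ 2) * θ ^ 2) := by
    rw [← exp_add]
    gcongr
    calc b * cos θ ≤ b * (1 - 2 / π ^ 2 * θ ^ 2) := by
          gcongr
          exact cos_le_one_sub_mul_cos_sq (abs_le.2 hθ)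
      _ = b + -(2 * b / π ^ 2) * θ ^ 2 := by ring
  calc ∫ θ in -π..π, exp (b * cos θ)
    _ ≤ ∫ θ in -π..π, exp b * exp (-(2 * b / π ^ 2) * θ ^ 2) :=
      integral_mono_on neg_pi_le_pi (Continuous.intervalIntegrable (by fun_prop) _ _)
        (Continuous.intervalIntegrable (by fun_prop) _ _) pointwise
    _ = exp b * ∫ θ in -π..π, exp (-(2 * b / π ^ 2) * θ ^ 2) := integral_const_mul _ _
    _ ≤ exp b * √(π / (2 * b / π ^ 2)) := by
      gcongr
      exact integral_exp_neg_mul_sq_le (by positivity) neg_pi_le_pi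
    _ = exp b * √(π ^ 3 / (2 * b)) := by
      congr 2
      field_simp

lemma abs_besselJ_le_exp_mul_sqrt (n : ℕ) {x R b : ℝ} (hR : 0 < R) (hb : 0 < b)
    (hxRb : x / 2 * (R - R⁻¹) = b) :
    |besselJ n x| ≤ R⁻¹ ^ n * exp b * √(π / (8 * b)) := by
  have sqrt_eq : (2 * π)⁻¹ * √(π ^ 3 / (2 * b)) = √(π / (8 * b)) := by
    rw [eq_comm, sqrt_eq_iff_mul_self_eq (by positivity) (by positivity), mul_mul_mul_comm,
      mul_self_sqrt (by positivity)]
    field_simp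
    norm_num
  calc |besselJ n x|
    _ ≤ R⁻¹ ^ n * ((2 * π)⁻¹ * ∫ θ in -π..π, exp (b * cos θ)) :=
      hxRb ▸ abs_besselJ_le_integral n x hR
    _ ≤ R⁻¹ ^ n * ((2 * π)⁻¹ * (exp b * √(π ^ 3 / (2 * b)))) := by
      gcongr
      exact integral_exp_mul_cos_le hb
    _ = R⁻¹ ^ n * exp b * √(π / (8 * b)) := by
      rw [← sqrt_eq]
      ring

/-- The critical point `R ≥ 1` of the exponent `ε / 2 * (R - R⁻¹) - log R`, for `ε ∈ (0, 1]`. -/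
noncomputable def kapteynSaddle (ε : ℝ) : ℝ :=
  (1 + √(1 - ε ^ 2)) / ε

lemma inv_kapteynSaddle {ε : ℝ} (hε₀ : ε ≠ 0) (hε₁ : ε ^ 2 ≤ 1) :
    (kapteynSaddle ε)⁻¹ = (1 - √(1 - ε ^ 2)) / ε := by
  have sq_sqrt_eq : √(1 - ε ^ 2) ^ 2 = 1 - ε ^ 2 := sq_sqrt (by linarith)
  rw [kapteynSaddle, inv_div, div_eq_div_iff (by positivity) hε₀]
  linear_combination sq_sqrt_eq

lemma mul_kapteynSaddle_sub_inv {ε : ℝ} (hε₀ : ε ≠ 0) (hε₁ : ε ^ 2 ≤ 1) :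
    ε / 2 * (kapteynSaddle ε - (kapteynSaddle ε)⁻¹) = √(1 - ε ^ 2) := by
  rw [inv_kapteynSaddle hε₀ hε₁, kapteynSaddle]
  field_simp
  ring

lemma inv_kapteynSaddle_mul_exp {ε : ℝ} (hε₀ : ε ≠ 0) (hε₁ : ε ^ 2 ≤ 1) :
    (kapteynSaddle ε)⁻¹ * exp √(1 - ε ^ 2) = kapteynRho ε := by
  rw [inv_kapteynSaddle hε₀ hε₁, kapteynRho]
  ring

lemma abs_besselJ_mul_le {ε : ℝ} (hε₀ : 0 < ε) (hε₁ : ε < 1) {n : ℕ} (hn : 0 < n) :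
    |besselJ n (n * ε)| ≤ kapteynRho ε ^ n * √(π / (8 * (n * √(1 - ε ^ 2)))) := by
  have sq_lt_one : ε ^ 2 < 1 := pow_lt_one₀ hε₀.le hε₁ two_ne_zero
  have hs : 0 < √(1 - ε ^ 2) := sqrt_pos.2 (sub_pos.2 sq_lt_one)
  have saddle_pos : 0 < kapteynSaddle ε := by unfold kapteynSaddle; positivity
  have exponent_eq : n * ε / 2 * (kapteynSaddle ε - (kapteynSaddle ε)⁻¹) = n * √(1 - ε ^ 2) := by
    rw [← mul_kapteynSaddle_sub_inv hε₀.ne' sq_lt_one.le]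
    ring
  have rho_pow : (kapteynSaddle ε)⁻¹ ^ n * exp (n * √(1 - ε ^ 2)) = kapteynRho ε ^ n := by
    rw [exp_nat_mul, ← mul_pow, inv_kapteynSaddle_mul_exp hε₀.ne' sq_lt_one.le]
  exact rho_pow ▸
    abs_besselJ_le_exp_mul_sqrt n saddle_pos (mul_pos (Nat.cast_pos.2 hn) hs) exponent_eq

/-- For every `ε ∈ (0,1)` there is a constant `C > 0` with
`|J_n(nε)| ≤ C ρ(ε)^n / √n` for all `n ≥ 1`. -/
theorem besselJ_bound (ε : ℝ) (hε : ε ∈ Set.Ioo (0:ℝ) 1) :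
    ∃ C : ℝ, 0 < C ∧ ∀ n : ℕ, 1 ≤ n →
      |besselJ n (n * ε)| ≤ C * kapteynRho ε ^ n / Real.sqrt n := by
  obtain ⟨hε₀, hε₁⟩ := hε
  have hs : 0 < √(1 - ε ^ 2) := sqrt_pos.2 (sub_pos.2 (pow_lt_one₀ hε₀.le hε₁ two_ne_zero))
  refine ⟨√(π / (8 * √(1 - ε ^ 2))), by positivity, fun n hn ↦ ?_⟩
  calc |besselJ n (n * ε)|
    _ ≤ kapteynRho ε ^ n * √(π / (8 * (n * √(1 - ε ^ 2)))) := abs_besselJ_mul_le hε₀ hε₁ hn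
    _ = kapteynRho ε ^ n * √(π / (8 * √(1 - ε ^ 2)) / n) := by
      congr 2
      field_simp
    _ = √(π / (8 * √(1 - ε ^ 2))) * kapteynRho ε ^ n / √n := by
      rw [sqrt_div (by positivity)]
      ring
end
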